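/- Let a ∈ {1,...,K−1} and suppose ρ > 0 and q_a ≤ 1 < q_{a+1}. Then the LP objective at the intersection point p(a,a+1) is at least its value at the corner point (1/q_{a+1})·e_{a+1}, i.e., f(p(a,a+1)) ≥ ((a+1)/(a+2))·(1/q_{a+1}), if and only if α ≥ σ_a, where σ_a = 1 + log((a+1)/(a+2))/log((a+1)/a). -/

import Mathlib

/-- Transmission cost per placement of a type-`t` subfile: `c_t = ρ·t^α`. -/
noncomputable def cCost (ρ α : ℝ) (t : ℕ) : ℝ := ρ * (t : ℝ) ^ α

/-- `q_t = (N·c_t·(t+1) + t·(K+1)) / (K·(t+1))`. -/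
noncomputable def q (K N : ℕ) (ρ α : ℝ) (t : ℕ) : ℝ :=
  ((N : ℝ) * cCost ρ α t * ((t : ℝ) + 1) + (t : ℝ) * ((K : ℝ) + 1)) /
    ((K : ℝ) * ((t : ℝ) + 1))

/-- Feasibility for the caching LP: `Σ_{t=1}^K q_t·y_t ≤ 1`, `Σ_{t=1}^K y_t ≤ 1`,
and `y_t ≥ 0` for all `t ∈ {1,…,K}`. -/
def Feasible (K N : ℕ) (ρ α : ℝ) (y : ℕ → ℝ) : Prop :=
  (∑ t ∈ Finset.Icc 1 K, q K N ρ α t * y t ≤ 1) ∧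
  (∑ t ∈ Finset.Icc 1 K, y t ≤ 1) ∧
  (∀ t ∈ Finset.Icc 1 K, 0 ≤ y t)

/-- The caching LP objective `f(y) = Σ_{t=1}^K (t/(t+1))·y_t`. -/
noncomputable def objF (K : ℕ) (y : ℕ → ℝ) : ℝ :=
  ∑ t ∈ Finset.Icc 1 K, ((t : ℝ) / ((t : ℝ) + 1)) * y t

/-- The intersection point `p(i,j)`: `y_i = (q_j − 1)/(q_j − q_i)`,
`y_j = (1 − q_i)/(q_j − q_i)`, and `y_t = 0` otherwise. -/
noncomputable def pInter (K N : ℕ) (ρ α : ℝ) (i j : ℕ) : ℕ → ℝ := fun t =>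
  if t = i then (q K N ρ α j - 1) / (q K N ρ α j - q K N ρ α i)
  else if t = j then (1 - q K N ρ α i) / (q K N ρ α j - q K N ρ α i)
  else 0

/-- `σ_t = 1 + log((t+1)/(t+2)) / log((t+1)/t)`. -/
noncomputable def sigma (t : ℕ) : ℝ :=
  1 + Real.log (((t : ℝ) + 1) / ((t : ℝ) + 2)) / Real.log (((t : ℝ) + 1) / (t : ℝ))

/-!
Write `w_t = t/(t+1)` for the objective coefficients. The corner on the `j`-th axis and `p(i,j)`
both lie on the line `q_i y_i + q_j y_j = 1`, and the step from the first to the second is a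
positive multiple of `(q_j, -q_i)`; hence `f` does not decrease exactly when `w_j q_i ≤ w_i q_j`.
Now `q_t` is `(N/K) c_t` plus a multiple of `w_t` with a factor independent of `t`; that multiple
cancels from the cross products and leaves `w_j c_i ≤ w_i c_j`. Taking logarithms turns this into
a lower bound on `α`.
-/

/-- The exponent `α` at which `t/(t+1) * s^α` and `s/(s+1) * t^α` agree, for `0 < s < t`. It extends
`sigma`, the case `t = s + 1`, to arbitrary pairs of real indices. -/
noncomputable def sigmaPair (s t : ℝ) : ℝ :=
  1 + Real.log ((s + 1) / (t + 1)) / Real.log (t / s)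

theorem sigmaPair_add_one (t : ℕ) : sigmaPair t (t + 1) = sigma t := by
  rw [sigmaPair, sigma, add_assoc (t : ℝ) 1 1, one_add_one_eq_two]

theorem sigmaPair_le_iff {s t : ℝ} (hs : 0 < s) (hst : s < t) (α : ℝ) :
    sigmaPair s t ≤ α ↔ t / (t + 1) * s ^ α ≤ s / (s + 1) * t ^ α := by
  have ht : 0 < t := hs.trans hst
  have hlog : 0 < Real.log (t / s) := Real.log_pos ((one_lt_div hs).2 hst)
  have hpow : (t / s) ^ (α - 1) = (s * t ^ α) / (t * s ^ α) := by
    rw [Real.rpow_sub_one (by positivity), Real.div_rpow ht.le hs.le]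
    field_simp
  calc sigmaPair s t ≤ α
      ↔ Real.log ((s + 1) / (t + 1)) ≤ (α - 1) * Real.log (t / s) := by
        rw [sigmaPair, ← le_sub_iff_add_le', div_le_iff₀ hlog]
    _ ↔ (s + 1) / (t + 1) ≤ (s * t ^ α) / (t * s ^ α) := by
        rw [← Real.le_rpow_iff_log_le (by positivity) (by positivity), hpow]
    _ ↔ t / (t + 1) * s ^ α ≤ s / (s + 1) * t ^ α := by
        rw [div_mul_eq_mul_div, div_mul_eq_mul_div, div_le_div_iff₀ (by positivity) (by positivity),
          div_le_div_iff₀ (by positivity) (by positivity), mul_comm (s + 1), mul_comm (t * s ^ α)]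

theorem mul_one_div_le_intersection_iff {𝕜 : Type*} [Field 𝕜] [LinearOrder 𝕜]
    [IsStrictOrderedRing 𝕜] {u v x y : 𝕜} (hxy : x < y) (hy : 1 < y) :
    v * (1 / y) ≤ u * ((y - 1) / (y - x)) + v * ((1 - x) / (y - x)) ↔ v * x ≤ u * y := by
  have hy₀ : 0 < y := one_pos.trans hy
  have hyx : 0 < y - x := sub_pos.2 hxy
  have hy₁ : 0 < y - 1 := sub_pos.2 hy
  have gap : u * ((y - 1) / (y - x)) + v * ((1 - x) / (y - x)) - v * (1 / y) =
      (y - 1) / (y * (y - x)) * (u * y - v * x) := by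
    field_simp
    ring
  rw [← sub_nonneg, gap, mul_nonneg_iff_of_pos_left (div_pos hy₁ (mul_pos hy₀ hyx)), sub_nonneg]

section CachingLP

variable {K N : ℕ} {ρ α : ℝ} {i j : ℕ}

theorem objF_pInter (hi : i ∈ Finset.Icc 1 K) (hj : j ∈ Finset.Icc 1 K) (hij : i ≠ j) :
    objF K (pInter K N ρ α i j) =
      (i : ℝ) / (i + 1) * ((q K N ρ α j - 1) / (q K N ρ α j - q K N ρ α i)) +
        (j : ℝ) / (j + 1) * ((1 - q K N ρ α i) / (q K N ρ α j - q K N ρ α i)) := by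
  rw [objF, Finset.sum_eq_add_of_mem i j hi hj hij]
  · simp only [pInter, if_pos, if_neg hij.symm]
  · rintro t - ⟨hti, htj⟩
    simp only [pInter, if_neg hti, if_neg htj, mul_zero]

theorem q_eq_add (K N : ℕ) (ρ α : ℝ) (t : ℕ) :
    q K N ρ α t = N / K * cCost ρ α t + (K + 1) / K * (t / (t + 1)) := by
  rw [q]
  field_simp

theorem div_add_one_mul_q_le_iff (hK : 0 < K) (hN : 0 < N) :
    (j : ℝ) / (j + 1) * q K N ρ α i ≤ i / (i + 1) * q K N ρ α j ↔
      (j : ℝ) / (j + 1) * cCost ρ α i ≤ i / (i + 1) * cCost ρ α j := by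
  have hNK : 0 < (N : ℝ) / K := by positivity
  have cancel : (i : ℝ) / (i + 1) * q K N ρ α j - j / (j + 1) * q K N ρ α i =
      N / K * (i / (i + 1) * cCost ρ α j - j / (j + 1) * cCost ρ α i) := by
    rw [q_eq_add, q_eq_add]
    ring
  rw [← sub_nonneg, cancel, mul_nonneg_iff_of_pos_left hNK, sub_nonneg]

theorem div_add_one_mul_cCost_le_iff (hρ : 0 < ρ) (hi : 0 < i) (hij : i < j) :
    (j : ℝ) / (j + 1) * cCost ρ α i ≤ i / (i + 1) * cCost ρ α j ↔ sigmaPair i j ≤ α := by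
  rw [sigmaPair_le_iff (Nat.cast_pos.2 hi) (Nat.cast_lt.2 hij), cCost, cCost,
    mul_left_comm, mul_left_comm _ ρ, mul_le_mul_iff_right₀ hρ]

end CachingLP

theorem intersection_vs_corner_iff_sigma_general
    {K N : ℕ} (hN : 0 < N) {α ρ : ℝ} (hρ : 0 < ρ)
    {i j : ℕ} (hi : 1 ≤ i) (hij : i < j) (hjK : j ≤ K)
    (hq : q K N ρ α i < q K N ρ α j) (hqj : 1 < q K N ρ α j) :
    (j : ℝ) / (j + 1) * (1 / q K N ρ α j) ≤ objF K (pInter K N ρ α i j) ↔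
      sigmaPair i j ≤ α := by
  have hi_mem : i ∈ Finset.Icc 1 K := Finset.mem_Icc.2 ⟨hi, hij.le.trans hjK⟩
  have hj_mem : j ∈ Finset.Icc 1 K := Finset.mem_Icc.2 ⟨hi.trans hij.le, hjK⟩
  rw [objF_pInter hi_mem hj_mem hij.ne, mul_one_div_le_intersection_iff hq hqj,
    div_add_one_mul_q_le_iff (by lia) hN, div_add_one_mul_cCost_le_iff hρ hi hij]

theorem intersection_vs_corner_iff_sigma
    (K N : ℕ) (hK : 2 ≤ K) (hKN : K ≤ N) (α ρ : ℝ)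
    (hα0 : 0 ≤ α) (hα1 : α ≤ 1) (hρ0 : 0 < ρ) (hρ1 : ρ ≤ 1)
    (a : ℕ) (ha : 1 ≤ a) (haK : a + 1 ≤ K)
    (hqa : q K N ρ α a ≤ 1) (hqb : 1 < q K N ρ α (a + 1)) :
    (((a : ℝ) + 1) / ((a : ℝ) + 2)) * (1 / q K N ρ α (a + 1)) ≤
        objF K (pInter K N ρ α a (a + 1)) ↔ sigma a ≤ α := by
  simpa [← sigmaPair_add_one, add_assoc, one_add_one_eq_two] using
    intersection_vs_corner_iff_sigma_general (by lia) hρ0 ha a.lt_succ_self haK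
      (hqa.trans_lt hqb) hqb
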